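/- If ĉ and d̂ are s-recurrent configurations with ĉ ~_s d̂, then φ(ĉ) ~ φ(d̂) in the sinkless model; in particular slvl(ĉ) = slvl(d̂). -/

import Mathlib

open Finset Polynomial

namespace SandpileBM

variable {V E : Type} [Fintype V] [DecidableEq V] [Fintype E] [DecidableEq E]

/-- The number of edges from `v` to `w` in the multigraph given by `src`, `tgt`. -/
def numEdges (src tgt : E → V) (v w : V) : ℕ :=
  (Finset.univ.filter fun e => src e = v ∧ tgt e = w).card

/-- The out-degree of a vertex. -/
def outdeg (src : E → V) (v : V) : ℕ :=
  (Finset.univ.filter fun e => src e = v).card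

/-- The in-degree of a vertex. -/
def indeg (tgt : E → V) (v : V) : ℕ :=
  (Finset.univ.filter fun e => tgt e = v).card

/-- The digraph is strongly connected: any vertex is reachable from any other by
a directed path. -/
def StronglyConnected (src tgt : E → V) : Prop :=
  ∀ v w : V, Relation.ReflTransGen (fun a b => ∃ e : E, src e = a ∧ tgt e = b) v w

/-- Result of firing the vertex `v` on the chip configuration `c` (sinkless model). -/
def fire (src tgt : E → V) (c : V → ℕ) (v : V) : V → ℕ :=
  fun w => c w + numEdges src tgt v w - (if w = v then outdeg src v else 0)

/-- One legal firing move in the sinkless model. -/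
def FireStep (src tgt : E → V) (c d : V → ℕ) : Prop :=
  ∃ v : V, outdeg src v ≤ c v ∧ d = fire src tgt c v

/-- `Reach c d`: `d` is obtained from `c` by a finite sequence of legal firing moves. -/
def Reach (src tgt : E → V) : (V → ℕ) → (V → ℕ) → Prop :=
  Relation.ReflTransGen (FireStep src tgt)

/-- Stability of a chip configuration. -/
def Stable (src : E → V) (c : V → ℕ) : Prop :=
  ∀ v : V, c v < outdeg src v

/-- A chip configuration is recurrent if it is not stable and every configuration
accessible from it can reach it back. -/
def Recurrent (src tgt : E → V) (c : V → ℕ) : Prop :=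
  ¬ Stable src c ∧ ∀ d : V → ℕ, Reach src tgt c d → Reach src tgt d c

/-- Level (total number of chips) of a chip configuration. -/
def lvl (c : V → ℕ) : ℕ := ∑ v : V, c v

/-- Indicator function of the vertex `s`. -/
def deltaS (s : V) : V → ℕ := fun v => if v = s then 1 else 0

/-- Result of firing the vertex `v` on an `s`-configuration. -/
def sfire (src tgt : E → V) (s : V) (c : {v : V // v ≠ s} → ℕ) (v : {v : V // v ≠ s}) :
    {v : V // v ≠ s} → ℕ :=
  fun w => c w + numEdges src tgt v.1 w.1 - (if w = v then outdeg src v.1 else 0)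

/-- One legal s-firing move. -/
def SFireStep (src tgt : E → V) (s : V) (c d : {v : V // v ≠ s} → ℕ) : Prop :=
  ∃ v : {v : V // v ≠ s}, outdeg src v.1 ≤ c v ∧ d = sfire src tgt s c v

/-- `SReach c d`: `d` is obtained from `c` by a finite sequence of legal s-firing moves. -/
def SReach (src tgt : E → V) (s : V) :
    ({v : V // v ≠ s} → ℕ) → ({v : V // v ≠ s} → ℕ) → Prop :=
  Relation.ReflTransGen (SFireStep src tgt s)

/-- Stability of an `s`-configuration. -/
def SStable (src : E → V) (s : V) (c : {v : V // v ≠ s} → ℕ) : Prop :=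
  ∀ v : {v : V // v ≠ s}, c v < outdeg src v.1

/-- The stabilization `c°` of an `s`-configuration: the (for strongly connected digraphs,
unique) stable `s`-configuration reachable from `c` by legal s-firing moves. -/
noncomputable def stab (src tgt : E → V) (s : V) (c : {v : V // v ≠ s} → ℕ) :
    {v : V // v ≠ s} → ℕ :=
  Classical.epsilon fun d => SReach src tgt s c d ∧ SStable src s d

/-- An `s`-configuration `c` is s-recurrent if every `s`-configuration can be completed
to one whose stabilization is `c`. -/
def SRecurrent (src tgt : E → V) (s : V) (c : {v : V // v ≠ s} → ℕ) : Prop :=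
  ∀ c₁ : {v : V // v ≠ s} → ℕ, ∃ c₂ : {v : V // v ≠ s} → ℕ,
    stab src tgt s (c₁ + c₂) = c

/-- `β_s`, recording the number of edges from `s` to each other vertex. -/
def betaS (src tgt : E → V) (s : V) : {v : V // v ≠ s} → ℕ :=
  fun v => numEdges src tgt s v.1

/-- The relation `~_s` on s-recurrent configurations: `d = (c + k·β_s)°` for some `k`. -/
def SEquiv (src tgt : E → V) (s : V) (c d : {v : V // v ≠ s} → ℕ) : Prop :=
  ∃ k : ℕ, stab src tgt s (c + k • betaS src tgt s) = d

/-- Restriction of a chip configuration to `V ∖ {s}`. -/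
def restrictS (s : V) (c : V → ℕ) : {v : V // v ≠ s} → ℕ := fun v => c v.1

/-- Extension `c̄` of an `s`-configuration by `0` at `s`. -/
def extendS (s : V) (c : {v : V // v ≠ s} → ℕ) : V → ℕ :=
  fun v => if h : v = s then 0 else c ⟨v, h⟩

/-- The s-index `χ(c)`: the least `k` such that `c̄ + k·δ_s` is recurrent. -/
noncomputable def sIndex (src tgt : E → V) (s : V) (c : {v : V // v ≠ s} → ℕ) : ℕ :=
  sInf {k : ℕ | Recurrent src tgt (extendS s c + k • deltaS s)}

/-- `φ(c) := c̄ + χ(c)·δ_s`. -/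
noncomputable def phi (src tgt : E → V) (s : V) (c : {v : V // v ≠ s} → ℕ) : V → ℕ :=
  extendS s c + sIndex src tgt s c • deltaS s

/-- The s-level `slvl(c) := χ(c) + Σ_{v ≠ s} c(v)`. -/
noncomputable def slvl (src tgt : E → V) (s : V) (c : {v : V // v ≠ s} → ℕ) : ℕ :=
  sIndex src tgt s c + ∑ v : {v : V // v ≠ s}, c v

/-- The d-level `dlvl(c) := deg⁺(s) + Σ_{v ≠ s} c(v)`. -/
def dlvl (src : E → V) (s : V) (c : {v : V // v ≠ s} → ℕ) : ℕ :=
  outdeg src s + ∑ v : {v : V // v ≠ s}, c v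

/-- The set (as a type) of recurrent chip configurations. -/
abbrev RecL (src tgt : E → V) := {c : V → ℕ // Recurrent src tgt c}

/-- The setoid on recurrent configurations generated by the relation `~` (i.e. `⤳`). -/
def recLSetoid (src tgt : E → V) : Setoid (RecL src tgt) :=
  Relation.EqvGen.setoid fun a b => Reach src tgt a.1 b.1

/-- The set of `~`-classes of recurrent configurations. -/
abbrev RecLQuot (src tgt : E → V) := Quotient (recLSetoid src tgt)

/-- The set (as a type) of s-recurrent configurations. -/
abbrev RecS (src tgt : E → V) (s : V) := {c : {v : V // v ≠ s} → ℕ // SRecurrent src tgt s c}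

/-- The setoid on s-recurrent configurations generated by the relation `~_s`. -/
def recSSetoid (src tgt : E → V) (s : V) : Setoid (RecS src tgt s) :=
  Relation.EqvGen.setoid fun a b => SEquiv src tgt s a.1 b.1

/-- The set of `~_s`-classes of s-recurrent configurations. -/
abbrev RecSQuot (src tgt : E → V) (s : V) := Quotient (recSSetoid src tgt s)

/-- The level of a `~`-class of recurrent configurations (level is constant on classes). -/
noncomputable def lvlClass (src tgt : E → V) (q : RecLQuot src tgt) : ℕ :=
  sSup ((fun c : RecL src tgt => lvl c.1) '' {c | Quotient.mk (recLSetoid src tgt) c = q})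

/-- The s-level of a `~_s`-class (s-level is constant on classes). -/
noncomputable def slvlClass (src tgt : E → V) (s : V) (q : RecSQuot src tgt s) : ℕ :=
  sSup ((fun c : RecS src tgt s => slvl src tgt s c.1) ''
    {c | Quotient.mk (recSSetoid src tgt s) c = q})

/-- The d-level of a `~_s`-class: the maximum d-level over the class. -/
noncomputable def dlvlClass (src tgt : E → V) (s : V) (q : RecSQuot src tgt s) : ℕ :=
  sSup ((fun c : RecS src tgt s => dlvl src s c.1) ''
    {c | Quotient.mk (recSSetoid src tgt s) c = q})

/-- The Biggs–Merino polynomial `B(G,s;y) = Σ_{[c] ∈ Rec(G,s)/~_s} y^{dlvl([c])}`. -/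
noncomputable def BM (src tgt : E → V) (s : V) : Polynomial ℤ :=
  ∑ᶠ q : RecSQuot src tgt s, X ^ dlvlClass src tgt s q

/-- `LegalSeq l c d`: firing the vertices in the list `l` in order is a sequence of
legal firing moves transforming `c` into `d` (sinkless model). -/
def LegalSeq (src tgt : E → V) : List V → (V → ℕ) → (V → ℕ) → Prop
  | [], c, d => d = c
  | v :: l, c, d => outdeg src v ≤ c v ∧ LegalSeq src tgt l (fire src tgt c v) d

/-- `SLegalSeq l c d`: firing the vertices in the list `l` in order is a sequence of
legal s-firing moves transforming `c` into `d`. -/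
def SLegalSeq (src tgt : E → V) (s : V) :
    List {v : V // v ≠ s} → ({v : V // v ≠ s} → ℕ) → ({v : V // v ≠ s} → ℕ) → Prop
  | [], c, d => d = c
  | v :: l, c, d => outdeg src v.1 ≤ c v ∧ SLegalSeq src tgt s l (sfire src tgt s c v) d

/-- The configuration obtained from `c` after firing the vertices of `l` in order. -/
def iterFire (src tgt : E → V) (c : V → ℕ) (l : List V) : V → ℕ :=
  l.foldl (fire src tgt) c

/-- The Laplacian of the digraph applied to an integer vector:
`(Δq)(v) = deg⁺(v)·q(v) − Σ_w A(w,v)·q(w)`. -/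
def lapApply (src tgt : E → V) (q : V → ℤ) : V → ℤ :=
  fun v => (outdeg src v : ℤ) * q v - ∑ w : V, (numEdges src tgt w v : ℤ) * q w

/-- `r` is the primitive period vector of the digraph: it has positive entries with
gcd `1`, lies in the kernel of the Laplacian, and generates this kernel. -/
def IsPeriodVector (src tgt : E → V) (r : V → ℕ) : Prop :=
  (∀ v : V, 0 < r v) ∧ Finset.univ.gcd r = 1 ∧
    lapApply src tgt (fun v => (r v : ℤ)) = 0 ∧
    ∀ q : V → ℤ, lapApply src tgt q = 0 → ∃ k : ℤ, q = k • fun v => (r v : ℤ)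

/-- The Laplacian matrix of the digraph. -/
def lapMatrix (src tgt : E → V) : Matrix V V ℤ :=
  Matrix.of fun v w =>
    if v = w then (outdeg src v : ℤ) - numEdges src tgt v v
    else -(numEdges src tgt w v : ℤ)

/-- The determinant of the reduced Laplacian obtained by deleting the row and
column indexed by `v`. -/
def reducedLapDet (src tgt : E → V) (v : V) : ℤ :=
  (((lapMatrix src tgt).submatrix (fun a : {w : V // w ≠ v} => a.1)
    (fun a : {w : V // w ≠ v} => a.1)).det)

/-- The period constant `α := gcd_{v ∈ V} det Δ_v`. -/
def periodConstant (src tgt : E → V) : ℤ :=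
  Finset.univ.gcd (reducedLapDet src tgt)

/-- `IsWalk l a b`: the list of edges `l` forms a directed walk from `a` to `b`. -/
def IsWalk (src tgt : E → V) : List E → V → V → Prop
  | [], a, b => a = b
  | e :: l, a, b => src e = a ∧ IsWalk src tgt l (tgt e) b

/-- `IsPath l a b`: the list of edges `l` forms a directed path from `a` to `b`:
all visited vertices are distinct (except that the final vertex is allowed to
coincide with the starting vertex). -/
def IsPath (src tgt : E → V) (l : List E) (a b : V) : Prop :=
  IsWalk src tgt l a b ∧ (l.map tgt).Nodup ∧ a ∉ (l.map tgt).dropLast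

/-- `T` is an arborescence rooted at `s`: for every vertex `v` there is a unique
directed path from `s` to `v` using only edges of `T`. -/
def IsArborescence (src tgt : E → V) (s : V) (T : Finset E) : Prop :=
  ∀ v : V, ∃! l : List E, (∀ e ∈ l, e ∈ T) ∧ IsPath src tgt l s v

/-- The edge `e ∉ T` is externally active for the arborescence `T` (w.r.t. the linear
order on `E`): where `P₁`, `P₂` are the two edge-disjoint directed paths in `T ∪ {e}`
sharing their starting vertex and ending at `tgt e`, with `e ∈ P₁`, the smallest edge
on `P₁ ++ P₂` lies on `P₁`. -/
def ExtActive [LinearOrder E] (src tgt : E → V) (T : Finset E) (e : E) : Prop :=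
  e ∉ T ∧ ∃ (u : V) (p₁ p₂ : List E),
    (∀ f ∈ p₁, f ∈ T ∨ f = e) ∧ (∀ f ∈ p₂, f ∈ T ∨ f = e) ∧
    IsPath src tgt p₁ u (tgt e) ∧ IsPath src tgt p₂ u (tgt e) ∧
    e ∈ p₁ ∧ (∀ f ∈ p₁, f ∉ p₂) ∧
    ∃ fmin ∈ p₁, ∀ f ∈ p₁ ++ p₂, fmin ≤ f

/-- The external activity `e(T)` of an arborescence `T`. -/
noncomputable def extActivity [LinearOrder E] (src tgt : E → V) (T : Finset E) : ℕ :=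
  Nat.card {e : E // ExtActive src tgt T e}

/-- The greedoid Tutte polynomial `T(G,s;y) = Σ_{T ∈ A(G,s)} y^{e(T)}`. -/
noncomputable def greedoidTutte [LinearOrder E] (src tgt : E → V) (s : V) : Polynomial ℤ :=
  ∑ᶠ T : {T : Finset E // IsArborescence src tgt s T}, X ^ extActivity src tgt T.1

/-- `f` is a `G^r`-parking function rooted at `s`. -/
def IsParking (src tgt : E → V) (s : V) (f : {v : V // v ≠ s} → ℕ) : Prop :=
  ∀ A : Finset {v : V // v ≠ s}, A.Nonempty →
    ∃ v ∈ A, f v < Nat.card {e : E // (∀ w ∈ A, src e ≠ w.1) ∧ tgt e = v.1}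

/-- The d-level of a `G^r`-parking function: `|E| − |V| + 1 − Σ_{v≠s} f(v)`. -/
noncomputable def parkDlvl (src : E → V) (s : V) (f : {v : V // v ≠ s} → ℕ) : ℕ :=
  ((Fintype.card E : ℤ) - Fintype.card V + 1 - ∑ v : {v : V // v ≠ s}, (f v : ℤ)).toNat

/-- `σ` is an s-decreasing traversal: a sequence in which every vertex and edge of `G`
appears exactly once, satisfying (R1) every vertex other than `s` is immediately
preceded by an edge targeting it, and (R2) every edge is the `<ₑ`-maximum edge not yet
seen whose source has been seen. -/
def IsTraversal [LinearOrder E] (src tgt : E → V) (s : V) (σ : List (V ⊕ E)) : Prop :=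
  σ.Nodup ∧ (∀ x : V ⊕ E, x ∈ σ) ∧
  (∀ (i : ℕ) (hi : i < σ.length) (v : V),
      σ.get ⟨i, hi⟩ = Sum.inl v → v ≠ s →
      0 < i ∧ ∃ e : E, tgt e = v ∧ σ.get ⟨i - 1, by omega⟩ = Sum.inr e) ∧
  (∀ (i : ℕ) (hi : i < σ.length) (e : E),
      σ.get ⟨i, hi⟩ = Sum.inr e →
      Sum.inl (src e) ∈ σ.take i ∧
      ∀ f : E, Sum.inr f ∉ σ.take i → Sum.inl (src f) ∈ σ.take i → f ≤ e)

open scoped Classical in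
/-- `Υ(σ)`: the set of edges immediately preceding a non-sink vertex in `σ`. -/
noncomputable def Upsilon (src tgt : E → V) (s : V) (σ : List (V ⊕ E)) : Finset E :=
  Finset.univ.filter fun e =>
    ∃ (i : ℕ) (hi : i < σ.length) (v : V), v ≠ s ∧ σ.get ⟨i, hi⟩ = Sum.inl v ∧
      0 < i ∧ ∃ hj : i - 1 < σ.length, σ.get ⟨i - 1, hj⟩ = Sum.inr e

/-- The strength of `σ`: the number of strong edges, i.e. edges whose target appears
before them in `σ`. -/
noncomputable def strength (tgt : E → V) (σ : List (V ⊕ E)) : ℕ :=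
  Nat.card {e : E // ∃ (i : ℕ) (hi : i < σ.length),
    σ.get ⟨i, hi⟩ = Sum.inr e ∧ Sum.inl (tgt e) ∈ σ.take i}

/-- `Ψ(σ)(v)`: one less than the number of edges targeting `v` that appear before the
vertex `v` in `σ`. -/
def Psi (tgt : E → V) (s : V) (σ : List (V ⊕ E)) : {v : V // v ≠ s} → ℕ :=
  fun v =>
    (((σ.takeWhile fun x => x ≠ Sum.inl v.1).filterMap Sum.getRight?).filter
      fun e => tgt e = v.1).length - 1

lemma sum_numEdges_mul (src tgt : E → V) (v : V) (F : V → ℕ) :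
    ∑ w, numEdges src tgt v w * F w
      = ∑ e ∈ Finset.univ.filter (fun e => src e = v), F (tgt e) := by
  rw [← Finset.sum_fiberwise_of_maps_to (g := tgt) (t := Finset.univ) (fun _ _ => Finset.mem_univ _)]
  refine Finset.sum_congr rfl fun w _ => ?_
  rw [Finset.sum_congr rfl (g := fun _ => F w)]
  · rw [Finset.sum_const, smul_eq_mul, Finset.filter_filter]
    rfl
  · intro e he
    rw [(Finset.mem_filter.1 he).2]

lemma sum_numEdges (src tgt : E → V) (v : V) :
    ∑ w, numEdges src tgt v w = outdeg src v := by
  have := sum_numEdges_mul src tgt v (fun _ => 1)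
  simpa [outdeg] using this

lemma sum_fire_mul (src tgt : E → V) (c : V → ℕ) (v : V) (hv : outdeg src v ≤ c v) (F : V → ℕ) :
    ∑ w, fire src tgt c v w * F w + outdeg src v * F v
      = ∑ w, c w * F w + ∑ w, numEdges src tgt v w * F w := by
  have h : outdeg src v * F v = ∑ w, (if w = v then outdeg src v else 0) * F w := by
    simp [ite_mul]
  rw [h, ← Finset.sum_add_distrib, ← Finset.sum_add_distrib]
  refine Finset.sum_congr rfl fun w _ => ?_
  rw [← add_mul, ← add_mul]
  congr 1
  unfold fire
  by_cases hw : w = v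
  · subst hw; simp; omega
  · simp [hw]

lemma lvl_fire (src tgt : E → V) (c : V → ℕ) (v : V) (hv : outdeg src v ≤ c v) :
    lvl (fire src tgt c v) = lvl c := by
  have := sum_fire_mul src tgt c v hv (fun _ => 1)
  simp only [mul_one, sum_numEdges] at this
  unfold lvl
  omega

lemma lvl_reach (src tgt : E → V) {c d : V → ℕ} (h : Reach src tgt c d) : lvl d = lvl c := by
  induction h with
  | refl => rfl
  | tail _ hs ih =>
    obtain ⟨v, hv, rfl⟩ := hs
    rw [lvl_fire _ _ _ _ hv, ih]

lemma lvl_extend (s : V) (c : {v : V // v ≠ s} → ℕ) (k : ℕ) :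
    lvl (extendS s c + k • deltaS s) = k + ∑ v, c v := by
  unfold lvl
  simp only [Pi.add_apply, Pi.smul_apply, Finset.sum_add_distrib, deltaS, smul_eq_mul]
  rw [add_comm]
  congr 1
  · simp
  · rw [← Fintype.sum_subtype_add_sum_subtype (fun v => v ≠ s)]
    have h2 : ∑ x : {x // ¬ x ≠ s}, extendS s c x.1 = 0 :=
      Finset.sum_eq_zero fun x _ => by
        have := x.2
        push Not at this
        simp [extendS, this]
    rw [h2, add_zero]
    refine Finset.sum_congr rfl fun x _ => ?_
    simp [extendS, x.2]

/-! ### exchange -/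

lemma fire_comm (src tgt : E → V) (c : V → ℕ) {v w : V} (hvw : v ≠ w)
    (hv : outdeg src v ≤ c v) (hw : outdeg src w ≤ c w) :
    fire src tgt (fire src tgt c v) w = fire src tgt (fire src tgt c w) v := by
  funext x
  unfold fire
  by_cases h1 : x = v
  · subst h1; simp [hvw]; omega
  · by_cases h2 : x = w
    · subst h2; simp [h1]; omega
    · simp [h1, h2]; omega

lemma fire_ge (src tgt : E → V) (c : V → ℕ) {v w : V} (hvw : w ≠ v) :
    c w + numEdges src tgt v w = fire src tgt c v w := by
  unfold fire; simp [hvw]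

lemma legal_exchange (src tgt : E → V) (v : V) : ∀ (l : List V) (c d : V → ℕ),
    LegalSeq src tgt l c d → v ∈ l → outdeg src v ≤ c v →
    LegalSeq src tgt (l.erase v) (fire src tgt c v) d := by
  intro l
  induction l with
  | nil => intro c d _ hm; simp at hm
  | cons u l ih =>
    intro c d h hm hv
    obtain ⟨hu, hl⟩ := h
    by_cases huv : u = v
    · subst huv
      simpa using hl
    · have hm' : v ∈ l := by
        rcases List.mem_cons.1 hm with h | h
        · exact absurd h.symm huv
        · exact h
      rw [List.erase_cons_tail (by simpa using huv)]
      refine ⟨?_, ?_⟩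
      · rw [← fire_ge src tgt c huv]; omega
      · rw [fire_comm src tgt c (Ne.symm huv) hv hu]
        apply ih _ _ hl hm'
        rw [← fire_ge src tgt c (Ne.symm huv)]; omega

lemma legal_append (src tgt : E → V) : ∀ (l l' : List V) (c d e : V → ℕ),
    LegalSeq src tgt l c d → LegalSeq src tgt l' d e → LegalSeq src tgt (l ++ l') c e := by
  intro l
  induction l with
  | nil => intro l' c d e h h'; cases h; exact h'
  | cons u l ih => intro l' c d e h h'; exact ⟨h.1, ih _ _ _ _ h.2 h'⟩

lemma legal_reach (src tgt : E → V) : ∀ (l : List V) (c d : V → ℕ),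
    LegalSeq src tgt l c d → Reach src tgt c d := by
  intro l
  induction l with
  | nil => intro c d h; cases h; exact Relation.ReflTransGen.refl
  | cons u l ih => intro c d h; exact Relation.ReflTransGen.head ⟨u, h.1, rfl⟩ (ih _ _ h.2)

lemma reach_legal (src tgt : E → V) {c d : V → ℕ} (h : Reach src tgt c d) :
    ∃ l, LegalSeq src tgt l c d := by
  induction h using Relation.ReflTransGen.head_induction_on with
  | refl => exact ⟨[], rfl⟩
  | head hs _ ih =>
    obtain ⟨v, hv, rfl⟩ := hs
    obtain ⟨l, hl⟩ := ih
    exact ⟨v :: l, hv, hl⟩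

lemma legal_mono (src tgt : E → V) (w : V) : ∀ (l : List V) (c d : V → ℕ),
    LegalSeq src tgt l c d → w ∉ l →
    c w ≤ d w ∧ ∀ u ∈ l, c w + numEdges src tgt u w ≤ d w := by
  intro l
  induction l with
  | nil => intro c d h _; cases h; simp
  | cons u l ih =>
    intro c d h hw
    simp only [List.mem_cons, not_or] at hw
    obtain ⟨h1, h2⟩ := ih _ _ h.2 hw.2
    have := fire_ge src tgt c hw.1
    refine ⟨by omega, ?_⟩
    intro x hx
    rcases List.mem_cons.1 hx with rfl | hx
    · omega
    · have := h2 x hx; omega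

lemma loop_full (src tgt : E → V) (hG : StronglyConnected src tgt) (s : V) (l : List V)
    (c : V → ℕ) (h : LegalSeq src tgt l c c) (hs : s ∈ l) (w : V) : w ∈ l := by
  have := hG s w
  induction this with
  | refl => exact hs
  | @tail a b _ he ih =>
    by_contra hb
    obtain ⟨e, h1, h2⟩ := he
    have h3 := (legal_mono src tgt b l c c h hb).2 a ih
    have h4 : 0 < numEdges src tgt a b :=
      Finset.card_pos.2 ⟨e, by simp [h1, h2]⟩
    omega

lemma loop_back (src tgt : E → V) (hG : StronglyConnected src tgt) (s : V) (l : List V)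
    (c : V → ℕ) (h : LegalSeq src tgt l c c) (hs : s ∈ l) (d : V → ℕ)
    (hd : Reach src tgt c d) : Reach src tgt d c := by
  have : ∃ t, LegalSeq src tgt t d c := by
    induction hd with
    | refl => exact ⟨l, h⟩
    | tail _ hst ih =>
      obtain ⟨v, hv, rfl⟩ := hst
      obtain ⟨t, ht⟩ := ih
      exact ⟨_, legal_exchange src tgt v (t ++ l) _ _ (legal_append _ _ _ _ _ _ _ ht h)
        (List.mem_append_right _ (loop_full src tgt hG s l c h hs v)) hv⟩
  obtain ⟨t, ht⟩ := this
  exact legal_reach _ _ _ _ _ ht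

/-! ### recurrent closure -/

lemma stable_reach (src tgt : E → V) {c d : V → ℕ} (hc : Stable src c)
    (h : Reach src tgt c d) : d = c := by
  induction h with
  | refl => rfl
  | tail _ hs ih =>
    obtain ⟨v, hv, _⟩ := hs
    rw [ih] at hv
    exact absurd (hc v) (by omega)

lemma recurrent_reach (src tgt : E → V) {c d : V → ℕ} (hc : Recurrent src tgt c)
    (h : Reach src tgt c d) : Recurrent src tgt d := by
  refine ⟨fun hst => ?_, fun e he => (hc.2 e (h.trans he)).trans h⟩
  have := stable_reach src tgt hst (hc.2 d h)
  exact hc.1 (this ▸ hst)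

/-! ### relation between the two models -/

lemma ext_at_s (s : V) (c : {v : V // v ≠ s} → ℕ) (k : ℕ) :
    (extendS s c + k • deltaS s) s = k := by simp [extendS, deltaS]

lemma ext_at (s : V) (c : {v : V // v ≠ s} → ℕ) (k : ℕ) (v : V) (hv : v ≠ s) :
    (extendS s c + k • deltaS s) v = c ⟨v, hv⟩ := by simp [extendS, deltaS, hv]

lemma fire_ext (src tgt : E → V) (s : V) (c : {v : V // v ≠ s} → ℕ) (k : ℕ)
    (v : {v : V // v ≠ s}) :
    fire src tgt (extendS s c + k • deltaS s) v.1
      = extendS s (sfire src tgt s c v) + (k + numEdges src tgt v.1 s) • deltaS s := by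
  funext w
  by_cases hw : w = s
  · subst hw
    rw [← fire_ge _ _ _ (Ne.symm v.2), ext_at_s, ext_at_s]
  · rw [ext_at _ _ _ _ hw]
    unfold fire sfire
    rw [ext_at _ _ _ _ hw]
    simp [Subtype.ext_iff]

lemma fire_ext_s (src tgt : E → V) (s : V) (c : {v : V // v ≠ s} → ℕ) (k : ℕ) :
    fire src tgt (extendS s c + k • deltaS s) s
      = extendS s (c + betaS src tgt s)
        + (k + numEdges src tgt s s - outdeg src s) • deltaS s := by
  funext w
  by_cases hw : w = s
  · subst hw
    rw [ext_at_s]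
    unfold fire
    rw [ext_at_s]; simp
  · rw [ext_at _ _ _ _ hw, ← fire_ge _ _ _ hw, ext_at _ _ _ _ hw]
    rfl

lemma sreach_reach (src tgt : E → V) (s : V) {c d : {v : V // v ≠ s} → ℕ}
    (h : SReach src tgt s c d) (k : ℕ) :
    ∃ k' : ℕ, Reach src tgt (extendS s c + k • deltaS s) (extendS s d + k' • deltaS s) := by
  induction h with
  | refl => exact ⟨k, Relation.ReflTransGen.refl⟩
  | @tail a b _ hs ih =>
    obtain ⟨v, hv, rfl⟩ := hs
    obtain ⟨k', hk⟩ := ih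
    refine ⟨k' + numEdges src tgt v.1 s, hk.tail ⟨v.1, ?_, (fire_ext src tgt s a k' v).symm⟩⟩
    rw [ext_at _ _ _ _ v.2]; exact hv

/-! ### stabilization -/

lemma exists_weight (src tgt : E → V) (hG : StronglyConnected src tgt) (s : V) :
    ∃ g : V → ℕ, ∀ v, v ≠ s → outdeg src v * g v < ∑ w, numEdges src tgt v w * g w := by
  have hw : ∀ v, ∃ n, ∃ l : List E, IsWalk src tgt l v s ∧ l.length = n := by
    intro v
    have := hG v s
    induction this using Relation.ReflTransGen.head_induction_on with
    | refl => exact ⟨0, [], rfl, rfl⟩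
    | head he _ ih =>
      obtain ⟨e, h1, h2⟩ := he
      obtain ⟨n, l, hl, _⟩ := ih
      exact ⟨_, e :: l, ⟨h1, h2 ▸ hl⟩, rfl⟩
  classical
  let h : V → ℕ := fun v => Nat.find (hw v)
  have hstep : ∀ v, v ≠ s → ∃ e, src e = v ∧ h (tgt e) < h v := by
    intro v hv
    obtain ⟨l, hl, hlen⟩ := Nat.find_spec (hw v)
    cases l with
    | nil => exact absurd hl hv
    | cons e l =>
      refine ⟨e, hl.1, ?_⟩
      have : h (tgt e) ≤ l.length := Nat.find_min' _ ⟨l, hl.2, rfl⟩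
      have h3 : h v = l.length + 1 := by simpa using hlen.symm
      omega
  let H := ∑ v, h v
  have hH : ∀ v, h v ≤ H := fun v =>
    Finset.single_le_sum (f := h) (fun _ _ => Nat.zero_le _) (Finset.mem_univ v)
  let M := Fintype.card E + 1
  refine ⟨fun v => M ^ (H - h v), fun v hv => ?_⟩
  obtain ⟨e, he, hlt⟩ := hstep v hv
  have hD : outdeg src v < M := Nat.lt_succ_of_le (Finset.card_le_univ _)
  have hpos : 0 < M ^ (H - h v) := Nat.pow_pos (Nat.succ_pos _)
  calc outdeg src v * M ^ (H - h v) < M * M ^ (H - h v) := Nat.mul_lt_mul_of_pos_right hD hpos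
    _ = M ^ (H - h v + 1) := by rw [pow_succ, mul_comm]
    _ ≤ M ^ (H - h (tgt e)) := Nat.pow_le_pow_right (Nat.succ_pos _) (by have := hH v; omega)
    _ ≤ ∑ e ∈ Finset.univ.filter (fun e => src e = v), M ^ (H - h (tgt e)) :=
        Finset.single_le_sum (f := fun e => M ^ (H - h (tgt e))) (fun _ _ => Nat.zero_le _)
          (by simp [he])
    _ = _ := (sum_numEdges_mul src tgt v (fun w => M ^ (H - h w))).symm

/-- Termination, run in the sinkless model. -/
lemma exists_stab (src tgt : E → V) (hG : StronglyConnected src tgt) (s : V)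
    (c : {v : V // v ≠ s} → ℕ) : ∃ d, SReach src tgt s c d ∧ SStable src s d := by
  obtain ⟨g, hg⟩ := exists_weight src tgt hG s
  let B := ∑ v, g v
  have hB : ∀ x : V → ℕ, ∑ w, x w * g w ≤ lvl x * B := by
    intro x
    unfold lvl
    rw [Finset.sum_mul]
    exact Finset.sum_le_sum fun w _ => Nat.mul_le_mul_left _
      (Finset.single_le_sum (f := g) (fun _ _ => Nat.zero_le _) (Finset.mem_univ w))
  have key : ∀ n (c : {v : V // v ≠ s} → ℕ) (k : ℕ),
      lvl (extendS s c + k • deltaS s) * B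
        ≤ ∑ w, (extendS s c + k • deltaS s) w * g w + n →
      ∃ d, SReach src tgt s c d ∧ SStable src s d := by
    intro n
    induction n with
    | zero =>
      intro c k hn
      refine ⟨c, Relation.ReflTransGen.refl, fun v => ?_⟩
      by_contra hv
      push Not at hv
      have hv' : outdeg src v.1 ≤ (extendS s c + k • deltaS s) v.1 := by
        rw [ext_at _ _ _ _ v.2]; exact hv
      have h1 := sum_fire_mul src tgt _ v.1 hv' g
      have h2 := hg v.1 v.2
      have h3 := hB (fire src tgt (extendS s c + k • deltaS s) v.1)
      rw [lvl_fire _ _ _ _ hv'] at h3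
      omega
    | succ n ih =>
      intro c k hn
      by_cases hst : SStable src s c
      · exact ⟨c, Relation.ReflTransGen.refl, hst⟩
      unfold SStable at hst
      push Not at hst
      obtain ⟨v, hv⟩ := hst
      have hv' : outdeg src v.1 ≤ (extendS s c + k • deltaS s) v.1 := by
        rw [ext_at _ _ _ _ v.2]; exact hv
      have h1 := sum_fire_mul src tgt _ v.1 hv' g
      have h2 := hg v.1 v.2
      have h4 := lvl_fire src tgt _ v.1 hv'
      rw [fire_ext] at h1 h4
      obtain ⟨d, hd, hd'⟩ := ih (sfire src tgt s c v) _ (by rw [h4]; omega)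
      exact ⟨d, Relation.ReflTransGen.head ⟨v, hv, rfl⟩ hd, hd'⟩
  exact key _ c 0 (Nat.le_add_left _ _)

lemma sfire_comm (src tgt : E → V) (s : V) (c : {v : V // v ≠ s} → ℕ) {v w : {v : V // v ≠ s}}
    (hvw : v ≠ w) (hv : outdeg src v.1 ≤ c v) (hw : outdeg src w.1 ≤ c w) :
    sfire src tgt s (sfire src tgt s c v) w = sfire src tgt s (sfire src tgt s c w) v := by
  funext x
  unfold sfire
  by_cases h1 : x = v
  · subst h1; simp [hvw]; omega
  · by_cases h2 : x = w
    · subst h2; simp [h1]; omega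
    · simp [h1, h2]; omega

lemma sfire_ge (src tgt : E → V) (s : V) (c : {v : V // v ≠ s} → ℕ) {v w : {v : V // v ≠ s}}
    (hvw : w ≠ v) : c w ≤ sfire src tgt s c v w := by
  unfold sfire; simp [hvw]

lemma sstable_sreach (src tgt : E → V) (s : V) {c d : {v : V // v ≠ s} → ℕ}
    (hc : SStable src s c) (h : SReach src tgt s c d) : d = c := by
  induction h with
  | refl => rfl
  | tail _ hs ih =>
    obtain ⟨v, hv, _⟩ := hs
    rw [ih] at hv
    exact absurd (hc v) (by omega)

lemma stab_unique (src tgt : E → V) (s : V) {c d e : {v : V // v ≠ s} → ℕ}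
    (h1 : SReach src tgt s c d) (hd : SStable src s d)
    (h2 : SReach src tgt s c e) (he : SStable src s e) : d = e := by
  have hdia : ∀ a b c, SFireStep src tgt s a b → SFireStep src tgt s a c →
      ∃ d, Relation.ReflGen (SFireStep src tgt s) b d ∧
        Relation.ReflTransGen (SFireStep src tgt s) c d := by
    rintro a _ _ ⟨v, hv, rfl⟩ ⟨w, hw, rfl⟩
    by_cases hvw : v = w
    · subst hvw
      exact ⟨_, Relation.ReflGen.refl, Relation.ReflTransGen.refl⟩
    · refine ⟨_, Relation.ReflGen.single ⟨w, ?_, rfl⟩,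
        Relation.ReflTransGen.single ⟨v, ?_, sfire_comm src tgt s a hvw hv hw⟩⟩
      · exact hw.trans (sfire_ge src tgt s a (Ne.symm hvw))
      · exact hv.trans (sfire_ge src tgt s a hvw)
  obtain ⟨x, hx1, hx2⟩ := Relation.church_rosser hdia h1 h2
  rw [← sstable_sreach src tgt s hd hx1, ← sstable_sreach src tgt s he hx2]

lemma stab_spec (src tgt : E → V) (hG : StronglyConnected src tgt) (s : V)
    (c : {v : V // v ≠ s} → ℕ) :
    SReach src tgt s c (stab src tgt s c) ∧ SStable src s (stab src tgt s c) :=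
  Classical.epsilon_spec (exists_stab src tgt hG s c)

lemma sreach_add (src tgt : E → V) (s : V) {c d : {v : V // v ≠ s} → ℕ}
    (h : SReach src tgt s c d) (x : {v : V // v ≠ s} → ℕ) :
    SReach src tgt s (c + x) (d + x) := by
  induction h with
  | refl => exact Relation.ReflTransGen.refl
  | @tail a b _ hs ih =>
    obtain ⟨v, hv, rfl⟩ := hs
    refine ih.tail ⟨v, hv.trans (Nat.le_add_right _ _), ?_⟩
    funext w
    unfold sfire
    by_cases hw : w = v
    · subst hw; simp; omega
    · simp [hw]; omega

lemma stab_stab_add (src tgt : E → V) (hG : StronglyConnected src tgt) (s : V)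
    (c x : {v : V // v ≠ s} → ℕ) :
    stab src tgt s (stab src tgt s c + x) = stab src tgt s (c + x) := by
  have h1 := stab_spec src tgt hG s (stab src tgt s c + x)
  have h2 := stab_spec src tgt hG s (c + x)
  exact stab_unique src tgt s
    ((sreach_add src tgt s (stab_spec src tgt hG s c).1 x).trans h1.1) h1.2 h2.1 h2.2

lemma srec_stable (src tgt : E → V) (hG : StronglyConnected src tgt) (s : V)
    {c : {v : V // v ≠ s} → ℕ} (hc : SRecurrent src tgt s c) : SStable src s c := by
  obtain ⟨y, hy⟩ := hc 0
  exact hy ▸ (stab_spec src tgt hG s _).2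

lemma srec_period (src tgt : E → V) (hG : StronglyConnected src tgt) (s : V)
    {c : {v : V // v ≠ s} → ℕ} (hc : SRecurrent src tgt s c) :
    ∃ m, stab src tgt s (c + (m + 1) • betaS src tgt s) = c := by
  obtain ⟨i, j, hij, he⟩ := Set.Finite.exists_lt_map_eq_of_forall_mem
    (f := fun j : ℕ => stab src tgt s (j • betaS src tgt s))
    (t := Set.Iic (fun v : {v : V // v ≠ s} => outdeg src v.1))
    (fun j v => ((stab_spec src tgt hG s _).2 v).le) (Set.finite_Iic _)
  obtain ⟨y, hy⟩ := hc (i • betaS src tgt s)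
  obtain ⟨m, rfl⟩ := Nat.exists_eq_add_of_lt hij
  refine ⟨m, ?_⟩
  conv_lhs => rw [← hy, stab_stab_add src tgt hG]
  rw [show i • betaS src tgt s + y + (m + 1) • betaS src tgt s
    = (i + m + 1) • betaS src tgt s + y by module,
    ← stab_stab_add src tgt hG, ← he, stab_stab_add src tgt hG, hy]

lemma srec_symm (src tgt : E → V) (hG : StronglyConnected src tgt) (s : V)
    {c d : {v : V // v ≠ s} → ℕ} (hc : SRecurrent src tgt s c)
    (h : SEquiv src tgt s c d) : SEquiv src tgt s d c := by
  obtain ⟨m, hm⟩ := srec_period src tgt hG s hc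
  obtain ⟨k, rfl⟩ := h
  have hn : ∀ n : ℕ, stab src tgt s (c + (n * (m + 1)) • betaS src tgt s) = c := by
    intro n
    induction n with
    | zero =>
      have h1 := stab_spec src tgt hG s c
      simpa using sstable_sreach src tgt s (srec_stable src tgt hG s hc) h1.1
    | succ n ih =>
      rw [show c + ((n + 1) * (m + 1)) • betaS src tgt s
        = (c + (n * (m + 1)) • betaS src tgt s) + (m + 1) • betaS src tgt s by module,
        ← stab_stab_add src tgt hG, ih, hm]
  refine ⟨k * m, ?_⟩
  rw [stab_stab_add src tgt hG]
  conv_rhs => rw [← hn k]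
  congr 1
  module

/-! ### main -/

lemma reach_fire_s (src tgt : E → V) (s : V) : ∀ (j : ℕ) (c : {v : V // v ≠ s} → ℕ) (N : ℕ),
    j * outdeg src s ≤ N →
    ∃ N' : ℕ, Reach src tgt (extendS s c + N • deltaS s)
      (extendS s (c + j • betaS src tgt s) + N' • deltaS s) := by
  intro j
  induction j with
  | zero => intro c N _; exact ⟨N, by rw [zero_smul, add_zero]; exact Relation.ReflTransGen.refl⟩
  | succ j ih =>
    intro c N hN
    rw [add_mul, one_mul] at hN
    obtain ⟨N', h'⟩ := ih (c + betaS src tgt s) (N + numEdges src tgt s s - outdeg src s)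
      (by omega)
    refine ⟨N', Relation.ReflTransGen.head ⟨s, ?_, (fire_ext_s src tgt s c N).symm⟩ ?_⟩
    · rw [ext_at_s]; omega
    · rw [show c + (j + 1) • betaS src tgt s
        = c + betaS src tgt s + j • betaS src tgt s by module]
      exact h'

lemma exists_index (src tgt : E → V) (hG : StronglyConnected src tgt) (s : V)
    {c : {v : V // v ≠ s} → ℕ} (hc : SRecurrent src tgt s c) :
    ∃ k : ℕ, Recurrent src tgt (extendS s c + k • deltaS s) := by
  obtain ⟨m, hm⟩ := srec_period src tgt hG s hc
  let N := (m + 1) * outdeg src s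
  have hN : N = m * outdeg src s + outdeg src s := by simp only [N]; ring
  have hfire : outdeg src s ≤ (extendS s c + N • deltaS s) s := by rw [ext_at_s]; omega
  obtain ⟨N1, h1⟩ := reach_fire_s src tgt s m (c + betaS src tgt s)
    (N + numEdges src tgt s s - outdeg src s) (by omega)
  rw [show c + betaS src tgt s + m • betaS src tgt s
    = c + (m + 1) • betaS src tgt s by module] at h1
  have h2 := (stab_spec src tgt hG s (c + (m + 1) • betaS src tgt s)).1
  rw [hm] at h2
  obtain ⟨N2, h3⟩ := sreach_reach src tgt s h2 N1
  have h4 := h1.trans h3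
  rw [← fire_ext_s] at h4
  have h5 := lvl_reach src tgt h4
  rw [lvl_fire _ _ _ _ hfire, lvl_extend, lvl_extend] at h5
  obtain rfl : N2 = N := by omega
  obtain ⟨l, hl⟩ := reach_legal src tgt h4
  refine ⟨N, fun hst => absurd (hst s) (by omega), ?_⟩
  exact loop_back src tgt hG s (s :: l) _ ⟨hfire, hl⟩ (by simp)

lemma phi_recurrent (src tgt : E → V) (hG : StronglyConnected src tgt) (s : V)
    {c : {v : V // v ≠ s} → ℕ} (hc : SRecurrent src tgt s c) :
    Recurrent src tgt (phi src tgt s c) :=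
  Nat.sInf_mem (s := {k : ℕ | Recurrent src tgt (extendS s c + k • deltaS s)})
    (exists_index src tgt hG s hc)

lemma rounds (src tgt : E → V) (hG : StronglyConnected src tgt) (s : V)
    (c : {v : V // v ≠ s} → ℕ) (hc : SStable src s c) (k : ℕ)
    (hr : Recurrent src tgt (extendS s c + k • deltaS s)) (j : ℕ) :
    ∃ k' : ℕ, Reach src tgt (extendS s c + k • deltaS s)
      (extendS s (stab src tgt s (c + j • betaS src tgt s)) + k' • deltaS s) := by
  induction j with
  | zero =>
    have := sstable_sreach src tgt s hc (stab_spec src tgt hG s c).1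
    exact ⟨k, by rw [zero_smul, add_zero, this]; exact Relation.ReflTransGen.refl⟩
  | succ j ih =>
    obtain ⟨k', hk'⟩ := ih
    have hY := recurrent_reach src tgt hr hk'
    have hst := (stab_spec src tgt hG s (c + j • betaS src tgt s)).2
    have hfire : outdeg src s ≤ k' := by
      by_contra hlt
      push Not at hlt
      refine hY.1 fun v => ?_
      by_cases hv : v = s
      · subst hv; rw [ext_at_s]; exact hlt
      · rw [ext_at _ _ _ _ hv]; exact hst ⟨v, hv⟩
    have h1 := stab_spec src tgt hG s
      (stab src tgt s (c + j • betaS src tgt s) + betaS src tgt s)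
    obtain ⟨k2, h2⟩ := sreach_reach src tgt s h1.1
      (k' + numEdges src tgt s s - outdeg src s)
    rw [stab_stab_add src tgt hG, show c + j • betaS src tgt s + betaS src tgt s
      = c + (j + 1) • betaS src tgt s by module] at h2
    refine ⟨k2, hk'.trans (Relation.ReflTransGen.head
      ⟨s, ?_, (fire_ext_s src tgt s _ k').symm⟩ h2)⟩
    rw [ext_at_s]; exact hfire

lemma one_side (src tgt : E → V) (hG : StronglyConnected src tgt) (s : V)
    {c d : {v : V // v ≠ s} → ℕ} (hc : SRecurrent src tgt s c)
    (h : SEquiv src tgt s c d) :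
    ∃ k : ℕ, Reach src tgt (phi src tgt s c) (extendS s d + k • deltaS s) ∧
      slvl src tgt s c = k + ∑ v, d v ∧ sIndex src tgt s d ≤ k := by
  obtain ⟨j, rfl⟩ := h
  have hr := phi_recurrent src tgt hG s hc
  obtain ⟨k, hk⟩ := rounds src tgt hG s c (srec_stable src tgt hG s hc) _ hr j
  refine ⟨k, hk, ?_, Nat.sInf_le (recurrent_reach src tgt hr hk)⟩
  have := lvl_reach src tgt hk
  rw [lvl_extend, lvl_extend] at this
  exact this.symm

/-- If `ĉ ~_s d̂` for s-recurrent `ĉ`, `d̂` then `φ(ĉ) ~ φ(d̂)` in the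
sinkless model; in particular `slvl(ĉ) = slvl(d̂)`. -/
theorem phi_equiv_of_sEquiv [Nonempty V] (src tgt : E → V)
    (hG : StronglyConnected src tgt) (s : V) (ch dh : {v : V // v ≠ s} → ℕ)
    (hch : SRecurrent src tgt s ch) (hdh : SRecurrent src tgt s dh)
    (h : SEquiv src tgt s ch dh) :
    Reach src tgt (phi src tgt s ch) (phi src tgt s dh) ∧
      slvl src tgt s ch = slvl src tgt s dh := by
  obtain ⟨k, h1, h2, h3⟩ := one_side src tgt hG s hch h
  obtain ⟨k', _, h5, h6⟩ := one_side src tgt hG s hdh (srec_symm src tgt hG s hch h)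
  have e1 : slvl src tgt s dh = sIndex src tgt s dh + ∑ v, dh v := rfl
  have e2 : slvl src tgt s ch = sIndex src tgt s ch + ∑ v, ch v := rfl
  obtain rfl : k = sIndex src tgt s dh := by omega
  exact ⟨h1, by omega⟩

end SandpileBM
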